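/- Let d be a positive natural number, L ≥ 0, μ a probability measure on ℝ^d, and v : ℝ^d × [0,1] → ℝ^d such that for each s ∈ [0,1] the map v_s := v(·, s) is differentiable with Fréchet derivative Dv_s, and z ↦ Dv_s(z) is L-Lipschitz with respect to the operator norm, uniformly in s. Define C(y) := −∫_{s ∈ [0,1]} ∫_{ℝ^d} tr(Dv_s((1−s)·x₀ + s·y)) dμ(x₀) ds, and assume that for each y considered the function (s, x₀) ↦ tr(Dv_s((1−s)·x₀ + s·y)) is integrable with respect to the product of Lebesgue measure on [0,1] and μ. Then for all y₁, y₂ ∈ ℝ^d, |C(y₁) − C(y₂)| ≤ (L · d / 2) · ‖y₁ − y₂‖. -/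

import Mathlib

open MeasureTheory

/-! At time `s`, moving the endpoint of a straight path from `y₁` to `y₂` displaces its point by
only `s • (y₁ - y₂)`. Since the trace is Lipschitz for the operator norm, with constant the
dimension, the integrand at time `s` changes by at most `s * L * d * ‖y₁ - y₂‖`, and
`∫₀¹ s ds = 1 / 2`. -/

open Module (finrank)
open scoped NNReal

section Trace

variable {𝕜 E : Type*} [RCLike 𝕜] [NormedAddCommGroup E] [InnerProductSpace 𝕜 E]
  [FiniteDimensional 𝕜 E]

theorem norm_trace_le_finrank_mul_opNorm (A : E →L[𝕜] E) :
    ‖LinearMap.trace 𝕜 E A‖ ≤ finrank 𝕜 E * ‖A‖ := by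
  let b := stdOrthonormalBasis 𝕜 E
  have entry_le (i : Fin (finrank 𝕜 E)) : ‖inner 𝕜 (b i) (A (b i))‖ ≤ ‖A‖ := by
    simpa using (norm_inner_le_norm (b i) (A (b i))).trans
      (mul_le_mul_of_nonneg_left (A.le_opNorm (b i)) (norm_nonneg _))
  calc ‖LinearMap.trace 𝕜 E A‖ = ‖∑ i, inner 𝕜 (b i) (A (b i))‖ :=
        congrArg norm (LinearMap.trace_eq_sum_inner _ b)
    _ ≤ ∑ _i : Fin (finrank 𝕜 E), ‖A‖ := norm_sum_le_of_le _ fun i _ => entry_le i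
    _ = finrank 𝕜 E * ‖A‖ := by simp

theorem lipschitzWith_trace :
    LipschitzWith (finrank 𝕜 E) fun A : E →L[𝕜] E => LinearMap.trace 𝕜 E A :=
  LipschitzWith.of_dist_le_mul fun A B => by
    simpa [dist_eq_norm] using norm_trace_le_finrank_mul_opNorm (A - B)

end Trace

section Interpolation

variable {E F : Type*} [NormedAddCommGroup E] [NormedSpace ℝ E] [MeasurableSpace E]
  [NormedAddCommGroup F] [NormedSpace ℝ F]

/-- The integral of a time-dependent field `g` along the straight segments that start at a
`μ`-distributed point at time `0` and reach `y` at time `1`. -/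
noncomputable def interpolationIntegral (μ : Measure E) (g : ℝ → E → F) (y : E) : F :=
  ∫ s in Set.Icc (0 : ℝ) 1, ∫ x₀, g s ((1 - s) • x₀ + s • y) ∂μ

variable {μ : Measure E} [IsFiniteMeasure μ] {K : ℝ≥0} {y₁ y₂ : E}

theorem norm_integral_interpolation_sub_le {f : E → F} (hf : LipschitzWith K f)
    {s : ℝ} (hs : 0 ≤ s)
    (h₁ : Integrable (fun x₀ => f ((1 - s) • x₀ + s • y₁)) μ)
    (h₂ : Integrable (fun x₀ => f ((1 - s) • x₀ + s • y₂)) μ) :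
    ‖(∫ x₀, f ((1 - s) • x₀ + s • y₁) ∂μ) - ∫ x₀, f ((1 - s) • x₀ + s • y₂) ∂μ‖ ≤
      s * (K * μ.real Set.univ * ‖y₁ - y₂‖) := by
  have pointwise (x₀ : E) :
      ‖f ((1 - s) • x₀ + s • y₁) - f ((1 - s) • x₀ + s • y₂)‖ ≤ K * (s * ‖y₁ - y₂‖) := by
    simpa [← smul_sub, norm_smul, abs_of_nonneg hs] using
      hf.norm_sub_le ((1 - s) • x₀ + s • y₁) ((1 - s) • x₀ + s • y₂)
  rw [← integral_sub h₁ h₂]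
  calc _ ≤ K * (s * ‖y₁ - y₂‖) * μ.real Set.univ :=
        norm_integral_le_of_norm_le_const (.of_forall pointwise)
    _ = s * (K * μ.real Set.univ * ‖y₁ - y₂‖) := by ring

theorem norm_interpolationIntegral_sub_le {g : ℝ → E → F}
    (hg : ∀ s ∈ Set.Icc (0 : ℝ) 1, LipschitzWith K (g s))
    (h₁ : Integrable (fun p : ℝ × E => g p.1 ((1 - p.1) • p.2 + p.1 • y₁))
      ((volume.restrict (Set.Icc (0 : ℝ) 1)).prod μ))
    (h₂ : Integrable (fun p : ℝ × E => g p.1 ((1 - p.1) • p.2 + p.1 • y₂))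
      ((volume.restrict (Set.Icc (0 : ℝ) 1)).prod μ)) :
    ‖interpolationIntegral μ g y₁ - interpolationIntegral μ g y₂‖ ≤
      K * μ.real Set.univ / 2 * ‖y₁ - y₂‖ := by
  have bound_at_time : ∀ᵐ s ∂volume.restrict (Set.Icc (0 : ℝ) 1),
      ‖(∫ x₀, g s ((1 - s) • x₀ + s • y₁) ∂μ) - ∫ x₀, g s ((1 - s) • x₀ + s • y₂) ∂μ‖ ≤
        s * (K * μ.real Set.univ * ‖y₁ - y₂‖) := by
    filter_upwards [h₁.prod_right_ae, h₂.prod_right_ae, ae_restrict_mem measurableSet_Icc]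
      with s h₁s h₂s hs
    exact norm_integral_interpolation_sub_le (hg s hs) hs.1 h₁s h₂s
  have integral_time : ∫ s in Set.Icc (0 : ℝ) 1, s = 1 / 2 := by
    rw [integral_Icc_eq_integral_Ioc, ← intervalIntegral.integral_of_le zero_le_one, integral_id]
    norm_num
  rw [interpolationIntegral, interpolationIntegral,
    ← integral_sub h₁.integral_prod_left h₂.integral_prod_left]
  calc _ ≤ ∫ s in Set.Icc (0 : ℝ) 1, s * (K * μ.real Set.univ * ‖y₁ - y₂‖) :=
        norm_integral_le_of_norm_le (Continuous.integrableOn_Icc (by fun_prop)) bound_at_time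
    _ = K * μ.real Set.univ / 2 * ‖y₁ - y₂‖ := by
        rw [integral_mul_const, integral_time]
        ring

end Interpolation

section Divergence

variable {E : Type*} [NormedAddCommGroup E] [InnerProductSpace ℝ E] [MeasurableSpace E]

/-- The divergence term `C(y)` of the ELBO: minus the integral along the interpolation paths from
`μ` to `y` of the divergence of a velocity field, which is given through its spatial derivative
`Dv`. -/
noncomputable def divergenceTerm (μ : Measure E) (Dv : ℝ → E → E →L[ℝ] E) (y : E) : ℝ :=
  -interpolationIntegral μ (fun s z => LinearMap.trace ℝ E (Dv s z)) y

theorem divergence_term_lipschitz_general [FiniteDimensional ℝ E]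
    {μ : Measure E} [IsFiniteMeasure μ] {K : ℝ≥0} {v : E → ℝ → E} {Dv : ℝ → E → E →L[ℝ] E}
    (hdiff : ∀ s ∈ Set.Icc (0 : ℝ) 1, ∀ z, HasFDerivAt (fun z => v z s) (Dv s z) z)
    (hLip : ∀ s ∈ Set.Icc (0 : ℝ) 1, LipschitzWith K (Dv s)) {y₁ y₂ : E}
    (hint : ∀ y ∈ ({y₁, y₂} : Set E),
      Integrable (fun p : ℝ × E => LinearMap.trace ℝ E (Dv p.1 ((1 - p.1) • p.2 + p.1 • y)))
        ((volume.restrict (Set.Icc (0 : ℝ) 1)).prod μ)) :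
    |divergenceTerm μ Dv y₁ - divergenceTerm μ Dv y₂| ≤
      K * finrank ℝ E * μ.real Set.univ / 2 * ‖y₁ - y₂‖ := by
  have trace_lipschitz (s) (hs : s ∈ Set.Icc (0 : ℝ) 1) :
      LipschitzWith (finrank ℝ E * K) fun z => LinearMap.trace ℝ E (Dv s z) :=
    lipschitzWith_trace.comp (hLip s hs)
  rw [divergenceTerm, divergenceTerm, neg_sub_neg, abs_sub_comm, ← Real.norm_eq_abs]
  simpa [mul_comm] using
    norm_interpolationIntegral_sub_le trace_lipschitz (hint y₁ (by simp)) (hint y₂ (by simp))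

end Divergence

/-- Lipschitz continuity of the Jacobian of the velocity field implies
that the divergence term `C(y)` of the ELBO is `(L·d/2)`-Lipschitz in `y`. -/
theorem divergence_term_lipschitz (d : ℕ) (hd : 0 < d) (L : ℝ) (hL : 0 ≤ L)
    (μ : Measure (EuclideanSpace ℝ (Fin d))) [IsProbabilityMeasure μ]
    (v : EuclideanSpace ℝ (Fin d) → ℝ → EuclideanSpace ℝ (Fin d))
    (Dv : ℝ → EuclideanSpace ℝ (Fin d) →
      (EuclideanSpace ℝ (Fin d) →L[ℝ] EuclideanSpace ℝ (Fin d)))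
    (hdiff : ∀ s ∈ Set.Icc (0 : ℝ) 1, ∀ z, HasFDerivAt (fun z => v z s) (Dv s z) z)
    (hLip : ∀ s ∈ Set.Icc (0 : ℝ) 1, LipschitzWith (Real.toNNReal L) (Dv s))
    (y₁ y₂ : EuclideanSpace ℝ (Fin d))
    (hint : ∀ y ∈ ({y₁, y₂} : Set (EuclideanSpace ℝ (Fin d))),
      Integrable
        (fun p : ℝ × EuclideanSpace ℝ (Fin d) =>
          LinearMap.trace ℝ (EuclideanSpace ℝ (Fin d))
            (Dv p.1 ((1 - p.1) • p.2 + p.1 • y) :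
              EuclideanSpace ℝ (Fin d) →ₗ[ℝ] EuclideanSpace ℝ (Fin d)))
        ((volume.restrict (Set.Icc (0 : ℝ) 1)).prod μ)) :
    |(-∫ s in Set.Icc (0 : ℝ) 1, ∫ x₀,
        LinearMap.trace ℝ (EuclideanSpace ℝ (Fin d))
          (Dv s ((1 - s) • x₀ + s • y₁) :
            EuclideanSpace ℝ (Fin d) →ₗ[ℝ] EuclideanSpace ℝ (Fin d)) ∂μ) -
      (-∫ s in Set.Icc (0 : ℝ) 1, ∫ x₀,
        LinearMap.trace ℝ (EuclideanSpace ℝ (Fin d))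
          (Dv s ((1 - s) • x₀ + s • y₂) :
            EuclideanSpace ℝ (Fin d) →ₗ[ℝ] EuclideanSpace ℝ (Fin d)) ∂μ)| ≤
      L * d / 2 * ‖y₁ - y₂‖ := by
  simpa [divergenceTerm, interpolationIntegral, Real.coe_toNNReal L hL] using
    divergence_term_lipschitz_general hdiff hLip hint
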